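/- For every γ > 0 and every finite set J, there exist ε > 0 and η > 0 such that the following holds. Let V = (J, (V_j)_{j∈J}, r, H) be a hypergraph system and let ν, g, g̃ be weighted hypergraphs on V. Suppose ν satisfies the H-linear forms condition within η, 0 ≤ g_e ≤ ν_e pointwise for all e ∈ H, 0 ≤ g̃_e ≤ 1 pointwise for all e ∈ H, and (g, g̃) is an ε-discrepancy pair. Then |E[∏_{e∈H} g_e(x_e) | x ∈ V_J] − E[∏_{e∈H} g̃_e(x_e) | x ∈ V_J]| ≤ γ. -/

import Mathlib

/-!
The proof is by densification: `g` is replaced by `g'` edge by edge, by induction on the number of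
edges on which the two differ.

Fix an edge `e₁` where `g` and `g'` differ and let `a`, `b`, `n` be the conditional expectations,
given the coordinates in `e₁`, of the products over `e ≠ e₁` of the weights `g`, `g'`, `ν`. The
difference of the two counts is `E[g_{e₁} (a - b)] + E[(g_{e₁} - g'_{e₁}) b]`. The second term is
small by the discrepancy hypothesis: for fixed coordinates outside `e₁`, every other edge misses a
coordinate of `e₁`.

For the first term, Cauchy–Schwarz and `g_{e₁} ≤ ν_{e₁}` reduce the problem to
`E[ν_{e₁} (a - b)²] = E[(ν_{e₁} - 1) (a - b)²] + E[(a - b)²]`. The first summand is small by the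
linear forms condition, after one Cauchy–Schwarz step for each coordinate of `e₁`, which replaces
all weights by their majorants. In the second summand, one factor `a` may be replaced by `min a 1`,
because `a ≤ n` and `n` is close to `1` in mean square. What remains,
`E[(a - b) (min a 1 - b)]`, is a combination of differences of counts in which the edge `e₁` carries
the same bounded weight `min a 1` or `b` in both hypergraphs, so the induction hypothesis applies.
-/

open Finset

/-- The average (expectation with respect to the uniform measure) of `f` over `α`. -/
noncomputable def avg {α : Type*} [Fintype α] (f : α → ℝ) : ℝ :=
  (∑ x, f x) / (Fintype.card α)

variable {J : Type} [Fintype J] [DecidableEq J] {V : J → Type}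

/-- Restriction (projection) of a full tuple `x ∈ V_J` to the coordinates in `e`. -/
def restr (e : Finset J) (x : (j : J) → V j) : (i : ↥e) → V i := fun i => x i.1

/-- Projection of a tuple indexed by `e` to the coordinates in the face `e.erase j`. -/
def faceProj {e : Finset J} (j : J) (x : (i : ↥e) → V i) :
    (i : ↥(e.erase j)) → V i :=
  fun i => x ⟨i.1, Finset.mem_of_mem_erase i.2⟩

/-- The product `∏_{f ∈ ∂e} 1_{B_f}(x_f)` of the indicators of the sets `B_f ⊆ V_f`
over the faces `f = e.erase j`, `j ∈ e`, of `e`. -/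
noncomputable def faceInd (e : Finset J)
    (B : (j : J) → Set ((i : ↥(e.erase j)) → V i)) (x : (i : ↥e) → V i) : ℝ :=
  ∏ j ∈ e, Set.indicator (B j) (fun _ => (1 : ℝ)) (faceProj j x)

/-- `(g, g')` is an `ε`-discrepancy pair on the edge `e`: for all choices of
`B_f ⊆ V_f` (`f ∈ ∂e`), `|E[(g(x_e) - g'(x_e)) ∏_{f ∈ ∂e} 1_{B_f}(x_f)]| ≤ ε`. -/
noncomputable def EdgeDiscrepancy [∀ j, Fintype (V j)] (e : Finset J)
    (g g' : ((i : ↥e) → V i) → ℝ) (ε : ℝ) : Prop :=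
  ∀ B : (j : J) → Set ((i : ↥(e.erase j)) → V i),
    |avg (fun x : (i : ↥e) → V i => (g x - g' x) * faceInd e B x)| ≤ ε

/-- `g` is upper `η`-regular on the edge `e`: for all choices of `B_f ⊆ V_f`
(`f ∈ ∂e`), `E[(g(x_e) - 1) ∏_{f ∈ ∂e} 1_{B_f}(x_f)] ≤ η`. -/
noncomputable def EdgeUpperRegular [∀ j, Fintype (V j)] (e : Finset J)
    (g : ((i : ↥e) → V i) → ℝ) (η : ℝ) : Prop :=
  ∀ B : (j : J) → Set ((i : ↥(e.erase j)) → V i),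
    avg (fun x : (i : ↥e) → V i => (g x - 1) * faceInd e B x) ≤ η

/-- `E ⊆ V_e` is the set of `r`-cliques of some `(r-1)`-uniform hypergraph: there are
sets `B_f ⊆ V_f` for the faces `f ∈ ∂e` with `1_E(x_e) = ∏_{f ∈ ∂e} 1_{B_f}(x_f)`. -/
def IsCliqueSet (e : Finset J) (E : Set ((i : ↥e) → V i)) : Prop :=
  ∃ B : (j : J) → Set ((i : ↥(e.erase j)) → V i),
    ∀ x, x ∈ E ↔ ∀ j ∈ e, faceProj j x ∈ B j

/-- `E ⊆ V_e` has complexity at most `T`: it can be partitioned into `T` (possibly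
empty) clique sets. -/
def ComplexityLE (e : Finset J) (E : Set ((i : ↥e) → V i)) (T : ℕ) : Prop :=
  ∃ P : Fin T → Set ((i : ↥e) → V i),
    (∀ i, IsCliqueSet e (P i)) ∧
    (∀ i₁ i₂, i₁ ≠ i₂ → P i₁ ∩ P i₂ = ∅) ∧
    (⋃ i, P i) = E

/-- The weighted hypergraph `ν` satisfies the `H`-linear forms condition within `η`:
for every choice of exponents `n (e, ω) ∈ {0,1}` (`e ∈ H`, `ω ∈ {0,1}^e`),
`|E[∏_{e ∈ H} ∏_{ω ∈ {0,1}^e} ν_e(x_e^{(ω)})^{n_{e,ω}} | x⁰, x¹ ∈ V_J] - 1| ≤ η`. -/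
noncomputable def HLinearForms [∀ j, Fintype (V j)] (H : Finset (Finset J))
    (ν : (e : Finset J) → ((i : ↥e) → V i) → ℝ) (η : ℝ) : Prop :=
  ∀ n : (e : Finset J) → (↥e → Bool) → Bool,
    |avg (fun x : ((j : J) → V j) × ((j : J) → V j) =>
      ∏ e ∈ H, ∏ ω : ↥e → Bool,
        if n e ω then ν e (fun i => if ω i then x.2 i.1 else x.1 i.1) else 1) - 1| ≤ η

namespace HypergraphCounting

open Function
open scoped BigOperators

section Expectation

variable {Ω Ω' : Type*} [Fintype Ω] [Fintype Ω']

lemma avg_eq_expect (f : Ω → ℝ) : avg f = 𝔼 x, f x :=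
  (Fintype.expect_eq_sum_div_card f).symm

lemma expect_prodType (f : Ω → Ω' → ℝ) : 𝔼 z : Ω × Ω', f z.1 z.2 = 𝔼 x, 𝔼 y, f x y := by
  rw [← univ_product_univ, expect_product']

lemma expect_expect_congr {f g : Ω → Ω' → ℝ} (h : ∀ x y, f x y = g x y) :
    𝔼 x, 𝔼 y, f x y = 𝔼 x, 𝔼 y, g x y := by
  simp only [h]

lemma sq_expect_mul_le {p : Ω → ℝ} (hp : ∀ x, 0 ≤ p x) (q : Ω → ℝ) :
    (𝔼 x, p x * q x) ^ 2 ≤ (𝔼 x, p x) * 𝔼 x, p x * q x ^ 2 := by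
  simp only [Fintype.expect_eq_sum_div_card, div_pow, div_mul_div_comm, ← sq]
  gcongr
  exact sum_sq_le_sum_mul_sum_of_sq_le_mul _ (fun x _ => hp x)
    (fun x _ => mul_nonneg (hp x) (sq_nonneg _)) fun x _ => (by ring : _ = _).le

lemma sq_expect_abs_le [Nonempty Ω] (f : Ω → ℝ) : (𝔼 x, |f x|) ^ 2 ≤ 𝔼 x, f x ^ 2 := by
  simpa using sq_expect_mul_le (fun _ => zero_le_one) fun x => |f x|

lemma expect_expect_fst_perm [Nonempty Ω'] (σ : Equiv.Perm (Ω × Ω')) (f : Ω → ℝ) :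
    𝔼 x, 𝔼 y, f (σ (x, y)).1 = 𝔼 x, f x :=
  calc 𝔼 x, 𝔼 y, f (σ (x, y)).1 = 𝔼 z, f (σ z).1 :=
        (expect_prodType fun x y => f (σ (x, y)).1).symm
    _ = 𝔼 z : Ω × Ω', f z.1 := Fintype.expect_equiv σ _ _ fun _ => rfl
    _ = 𝔼 x, f x := by simp [expect_prodType fun (x : Ω) (_ : Ω') => f x]

end Expectation

section Conditioning

variable {ι κ : Type*} {α : ι → Type*}

lemma dependsOn_mul {f g : (∀ i, α i) → ℝ} {s : Set ι} (hf : DependsOn f s) (hg : DependsOn g s) :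
    DependsOn (fun x => f x * g x) s := fun _ _ h => congrArg₂ _ (hf h) (hg h)

lemma dependsOn_prod {K : Finset κ} {f : κ → (∀ i, α i) → ℝ} {s : Set ι}
    (hf : ∀ k ∈ K, DependsOn (f k) s) : DependsOn (fun x => ∏ k ∈ K, f k x) s :=
  fun _ _ h => prod_congr rfl fun k hk => hf k hk h

variable [DecidableEq ι]

lemma dependsOn_piecewise {e : Finset ι} {f : (∀ i, α i) → ℝ} (hf : DependsOn f e)
    (x y : ∀ i, α i) : f (e.piecewise x y) = f x :=
  hf fun _ hi => e.piecewise_eq_of_mem x y hi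

variable [Fintype ι] [∀ i, Fintype (α i)]

/-- The conditional expectation of `f` given the coordinates in `e`, obtained by resampling all the
other coordinates. -/
noncomputable def condAvg (e : Finset ι) (f : (∀ i, α i) → ℝ) (x : ∀ i, α i) : ℝ :=
  𝔼 y, f (e.piecewise x y)

lemma condAvg_dependsOn (e : Finset ι) (f : (∀ i, α i) → ℝ) : DependsOn (condAvg e f) e :=
  fun _ _ h => expect_congr rfl fun _ _ =>
    congrArg f (e.piecewise_congr (fun i hi => h i hi) fun _ _ => rfl)

variable [∀ i, Nonempty (α i)]

lemma expect_expect_piecewise (e : Finset ι) (f : (∀ i, α i) → ℝ) :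
    𝔼 x, 𝔼 y, f (e.piecewise x y) = 𝔼 x, f x := by
  have swap_involutive : Involutive fun z : (∀ i, α i) × (∀ i, α i) =>
      (e.piecewise z.1 z.2, e.piecewise z.2 z.1) := fun z => by
    ext i <;> by_cases hi : i ∈ e <;> simp [hi]
  exact expect_expect_fst_perm swap_involutive.toPerm f

lemma expect_mul_condAvg {e : Finset ι} {c : (∀ i, α i) → ℝ} (hc : DependsOn c e)
    (f : (∀ i, α i) → ℝ) : 𝔼 x, c x * condAvg e f x = 𝔼 x, c x * f x := by
  simp only [condAvg, mul_expect]
  rw [← expect_expect_piecewise e fun x => c x * f x]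
  simp only [dependsOn_piecewise hc]

lemma expect_condAvg (e : Finset ι) (f : (∀ i, α i) → ℝ) : 𝔼 x, condAvg e f x = 𝔼 x, f x :=
  expect_expect_piecewise e f

lemma expect_mul_condAvg_mul_condAvg {e : Finset ι} {c : (∀ i, α i) → ℝ} (hc : DependsOn c e)
    (f g : (∀ i, α i) → ℝ) :
    𝔼 x, c x * (condAvg e f x * condAvg e g x) =
      𝔼 x, 𝔼 y, c x * (f x * g (e.piecewise x y)) :=
  calc 𝔼 x, c x * (condAvg e f x * condAvg e g x)
      = 𝔼 x, c x * condAvg e g x * condAvg e f x := expect_congr rfl fun x _ => by ring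
    _ = 𝔼 x, c x * condAvg e g x * f x :=
        expect_mul_condAvg (dependsOn_mul hc (condAvg_dependsOn e g)) f
    _ = 𝔼 x, 𝔼 y, c x * (f x * g (e.piecewise x y)) := by
        simp only [condAvg, mul_expect, expect_mul]
        exact expect_expect_congr fun x y => by ring

end Conditioning

section CauchySchwarz

variable {ι κ : Type*} {α : ι → Type*}

/-- `g x y` depends only on the coordinates of `x` in `s` and on those of `y` in `t`. -/
def DependsOnPair (g : (∀ i, α i) → (∀ i, α i) → ℝ) (s t : Finset ι) : Prop :=
  ∀ ⦃x x' y y'⦄, (∀ i ∈ s, x i = x' i) → (∀ i ∈ t, y i = y' i) → g x y = g x' y'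

namespace DependsOnPair

variable {g g' : (∀ i, α i) → (∀ i, α i) → ℝ} {s s' t t' : Finset ι}

lemma mono (hg : DependsOnPair g s t) (hs : s ⊆ s') (ht : t ⊆ t') : DependsOnPair g s' t' :=
  fun _ _ _ _ hx hy => hg (fun i hi => hx i (hs hi)) fun i hi => hy i (ht hi)

lemma mul (hg : DependsOnPair g s t) (hg' : DependsOnPair g' s t) :
    DependsOnPair (fun x y => g x y * g' x y) s t :=
  fun _ _ _ _ hx hy => congrArg₂ _ (hg hx hy) (hg' hx hy)

lemma prod {K : Finset κ} {f : κ → (∀ i, α i) → (∀ i, α i) → ℝ}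
    (hf : ∀ k ∈ K, DependsOnPair (f k) s t) : DependsOnPair (fun x y => ∏ k ∈ K, f k x y) s t :=
  fun _ _ _ _ hx hy => prod_congr rfl fun k hk => hf k hk hx hy

lemma dependsOn_left (hg : DependsOnPair g s t) (y : ∀ i, α i) : DependsOn (fun x => g x y) s :=
  fun _ _ hx => hg hx fun _ _ => rfl

lemma update_right [DecidableEq ι] (hg : DependsOnPair g s t) {j : ι} (hj : j ∉ t)
    (x y : ∀ i, α i) (v : α j) : g x (update y j v) = g x y :=
  hg (fun _ _ => rfl) fun _ hi => update_of_ne (ne_of_mem_of_not_mem hi hj) v y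

end DependsOnPair

variable [DecidableEq ι]

/-- The effect of one Cauchy–Schwarz step in the coordinate `j` on a factor `g`: the product of
`g x y` with its copy in which the coordinate `x j` is replaced by `y j`. -/
def double (j : ι) (g : (∀ i, α i) → (∀ i, α i) → ℝ) (x y : ∀ i, α i) : ℝ :=
  g x y * g (update x j (y j)) y

/-- The product of `g` over the vertices of the combinatorial cube obtained from `x` by replacing
the coordinates in a subset of `I` by those of `y`. -/
def cube (I : Finset ι) (g : (∀ i, α i) → (∀ i, α i) → ℝ) (x y : ∀ i, α i) : ℝ :=
  ∏ A ∈ I.powerset, g (A.piecewise y x) y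

@[simp] lemma cube_empty (g : (∀ i, α i) → (∀ i, α i) → ℝ) : cube ∅ g = g := by
  funext x y
  simp [cube]

lemma cube_double {I : Finset ι} {j : ι} (hj : j ∉ I) (g : (∀ i, α i) → (∀ i, α i) → ℝ) :
    cube I (double j g) = cube (insert j I) g := by
  funext x y
  simp only [cube, double, prod_powerset_insert hj, prod_mul_distrib, piecewise_insert]

lemma DependsOnPair.double {g : (∀ i, α i) → (∀ i, α i) → ℝ} {s t t' : Finset ι} {j : ι}
    (hg : DependsOnPair g s t) (ht : t ⊆ t') (hj : j ∈ t') : DependsOnPair (double j g) s t' := by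
  intro x x' y y' hx hy
  refine congrArg₂ (· * ·) (hg hx fun i hi => hy i (ht hi))
    (hg (fun i hi => ?_) fun i hi => hy i (ht hi))
  rw [hy j hj]
  rcases eq_or_ne i j with rfl | hij
  · simp only [update_self]
  · simp only [update_of_ne hij, hx i hi]

variable [Fintype ι]

lemma dependsOnPair_mul_piecewise {u u' : (∀ i, α i) → ℝ} {s e : Finset ι} (hu : DependsOn u s)
    (hu' : DependsOn u' s) : DependsOnPair (fun x y => u x * u' (e.piecewise x y)) s eᶜ := by
  refine fun x x' y y' hx hy => congrArg₂ (· * ·) (hu hx) (hu' fun i hi => ?_)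
  by_cases hie : i ∈ e
  · simpa only [piecewise_eq_of_mem e _ _ hie] using hx i hi
  · simpa only [piecewise_eq_of_notMem e _ _ hie] using hy i (mem_compl.2 hie)

variable [∀ i, Fintype (α i)]

lemma sq_expect_mul_le_condAvg [∀ i, Nonempty (α i)] {Ω : Type*} [Fintype Ω] {e : Finset ι}
    {P N : (∀ i, α i) → Ω → ℝ}
    (hP : ∀ y, DependsOn (fun x => P x y) e) (hP0 : ∀ x y, 0 ≤ P x y)
    (hPN : ∀ x y, P x y ≤ N x y) (Q : (∀ i, α i) → Ω → ℝ) :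
    (𝔼 x, 𝔼 y, P x y * Q x y) ^ 2 ≤
      (𝔼 x, 𝔼 y, N x y) * 𝔼 x, 𝔼 y, N x y * condAvg e (fun x => Q x y) x ^ 2 := by
  let R x y := condAvg e (fun x => Q x y) x
  have expect_eq : 𝔼 x, 𝔼 y, P x y * Q x y = 𝔼 x, 𝔼 y, P x y * R x y := by
    rw [expect_comm, expect_comm univ univ fun x y => P x y * R x y]
    exact expect_congr rfl fun y _ => (expect_mul_condAvg (hP y) _).symm
  calc (𝔼 x, 𝔼 y, P x y * Q x y) ^ 2 = (𝔼 x, 𝔼 y, P x y * R x y) ^ 2 := by rw [expect_eq]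
    _ ≤ (𝔼 x, 𝔼 y, P x y) * 𝔼 x, 𝔼 y, P x y * R x y ^ 2 := by
      simpa only [← univ_product_univ, expect_product] using
        sq_expect_mul_le (p := fun z : (∀ i, α i) × Ω => P z.1 z.2) (fun z => hP0 z.1 z.2)
          fun z => R z.1 z.2
    _ ≤ (𝔼 x, 𝔼 y, N x y) * 𝔼 x, 𝔼 y, N x y * R x y ^ 2 := by
      refine mul_le_mul ?_ ?_ ?_ ?_
      · exact expect_le_expect fun x _ => expect_le_expect fun y _ => hPN x y
      · exact expect_le_expect fun x _ => expect_le_expect fun y _ =>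
          mul_le_mul_of_nonneg_right (hPN x y) (sq_nonneg _)
      · exact expect_nonneg fun x _ => expect_nonneg fun y _ => mul_nonneg (hP0 x y) (sq_nonneg _)
      · exact expect_nonneg fun x _ => expect_nonneg fun y _ => (hP0 x y).trans (hPN x y)

lemma sq_expect_mul_le_double [∀ i, Nonempty (α i)] {j : ι}
    {P N Q : (∀ i, α i) → (∀ i, α i) → ℝ}
    (hP : DependsOnPair P (univ.erase j) (univ.erase j))
    (hN : DependsOnPair N (univ.erase j) (univ.erase j)) (hQ : DependsOnPair Q univ (univ.erase j))
    (hP0 : ∀ x y, 0 ≤ P x y) (hPN : ∀ x y, P x y ≤ N x y) :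
    (𝔼 x, 𝔼 y, P x y * Q x y) ^ 2 ≤
      (𝔼 x, 𝔼 y, N x y) * 𝔼 x, 𝔼 y, N x y * double j Q x y := by
  refine (sq_expect_mul_le_condAvg hP.dependsOn_left hP0 hPN Q).trans_eq (congrArg _ ?_)
  have hj : j ∉ univ.erase j := notMem_erase j univ
  calc 𝔼 x, 𝔼 y, N x y * condAvg (univ.erase j) (fun x => Q x y) x ^ 2
      = 𝔼 x, 𝔼 y, 𝔼 v : ∀ i, α i, N x y * (Q x y * Q (update x j (v j)) y) := by
        rw [expect_comm, expect_comm univ univ fun x y => 𝔼 v : ∀ i, α i, _]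
        refine expect_congr rfl fun y _ => ?_
        simp only [sq, expect_mul_condAvg_mul_condAvg (hN.dependsOn_left y), piecewise_erase_univ]
    _ = 𝔼 x, 𝔼 y, N x y * double j Q x y := by
        refine expect_congr rfl fun x _ => ?_
        rw [← expect_expect_piecewise (univ.erase j) fun y => N x y * double j Q x y]
        simp only [double, piecewise_erase_univ, hN.update_right hj, hQ.update_right hj,
          update_self]

/-- Nonnegative factors `f k`, `k ∈ K`, of scopes `s k` in their first argument, with majorants
`M k`, ready for Cauchy–Schwarz steps in the coordinates `e`: the second argument is free of the
coordinates `e`, and products of cubes of the majorants have average at most `C`. The majorant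
replaces `f k` at the first step whose coordinate lies outside `s k`. -/
structure IsMajorizedFamily (e : Finset ι) (K : Finset κ) (s : κ → Finset ι)
    (f M : κ → (∀ i, α i) → (∀ i, α i) → ℝ) (C : ℝ) : Prop where
  dependsOnPair : ∀ k ∈ K, DependsOnPair (f k) (s k) eᶜ
  dependsOnPair_majorant : ∀ k ∈ K, DependsOnPair (M k) (s k) eᶜ
  nonneg : ∀ k ∈ K, ∀ x y, 0 ≤ f k x y
  le_majorant : ∀ k ∈ K, ∀ x y, f k x y ≤ M k x y
  eq_majorant : ∀ k ∈ K, e ⊆ s k → f k = M k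
  expect_cube_le : ∀ I ⊆ e, ∀ K' ⊆ K, 𝔼 x, 𝔼 y, ∏ k ∈ K', cube (I ∩ s k) (M k) x y ≤ C

namespace IsMajorizedFamily

variable {e : Finset ι} {j : ι} {K : Finset κ} {s : κ → Finset ι}
  {f M : κ → (∀ i, α i) → (∀ i, α i) → ℝ} {C : ℝ}

lemma doubled (h : IsMajorizedFamily (insert j e) K s f M C) (hj : j ∉ e) :
    IsMajorizedFamily e K s (fun k => if j ∈ s k then double j (f k) else M k)
      (fun k => if j ∈ s k then double j (M k) else M k) C := by
  have compl_subset : (insert j e)ᶜ ⊆ eᶜ := compl_subset_compl.2 (subset_insert j e)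
  have mem_compl : j ∈ eᶜ := mem_compl.2 hj
  have dependsOnPair_ite (g : κ → (∀ i, α i) → (∀ i, α i) → ℝ) {k} (hk : k ∈ K)
      (hg : DependsOnPair (g k) (s k) (insert j e)ᶜ) :
      DependsOnPair (if j ∈ s k then double j (g k) else M k) (s k) eᶜ := by
    split_ifs
    · exact hg.double compl_subset mem_compl
    · exact (h.dependsOnPair_majorant k hk).mono subset_rfl compl_subset
  refine ⟨fun k hk => dependsOnPair_ite f hk (h.dependsOnPair k hk),
    fun k hk => dependsOnPair_ite M hk (h.dependsOnPair_majorant k hk),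
    fun k hk x y => ?_, fun k hk x y => ?_, fun k hk hek => ?_, fun I hI K' hK' => ?_⟩
  · split_ifs
    · exact mul_nonneg (h.nonneg k hk _ _) (h.nonneg k hk _ _)
    · exact (h.nonneg k hk x y).trans (h.le_majorant k hk x y)
  · split_ifs
    · exact mul_le_mul (h.le_majorant k hk _ _) (h.le_majorant k hk _ _) (h.nonneg k hk _ _)
        ((h.nonneg k hk _ _).trans (h.le_majorant k hk _ _))
    · exact le_rfl
  · split_ifs with hjk
    · rw [h.eq_majorant k hk (insert_subset hjk hek)]
    · rfl
  · refine (expect_expect_congr fun x y => prod_congr rfl fun k _ => ?_)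
      |>.trans_le (h.expect_cube_le (insert j I) (insert_subset_insert j hI) K' hK')
    split_ifs with hjk
    · rw [cube_double fun hjI => hj (hI (mem_inter.1 hjI).1), insert_inter_of_mem hjk]
    · rw [insert_inter_of_notMem hjk]

variable [∀ i, Nonempty (α i)]

lemma sq_expect_mul_prod_le (h : IsMajorizedFamily (insert j e) K s f M C)
    {F : (∀ i, α i) → (∀ i, α i) → ℝ} (hF : DependsOnPair F univ (insert j e)ᶜ) :
    (𝔼 x, 𝔼 y, F x y * ∏ k ∈ K, f k x y) ^ 2 ≤
      C * |𝔼 x, 𝔼 y, double j F x y *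
        ∏ k ∈ K, (if j ∈ s k then double j (f k) else M k) x y| := by
  let Kj := {k ∈ K | j ∈ s k}
  let Kj' := {k ∈ K | j ∉ s k}
  let P x y := ∏ k ∈ Kj', f k x y
  let N x y := ∏ k ∈ Kj', M k x y
  let Q x y := F x y * ∏ k ∈ Kj, f k x y
  have mem_of_mem {k} (hk : k ∈ Kj') : k ∈ K := (mem_filter.1 hk).1
  have compl_subset : (insert j e)ᶜ ⊆ univ.erase j := fun i hi =>
    mem_erase.2 ⟨fun hij => mem_compl.1 hi (hij ▸ mem_insert_self j e), mem_univ i⟩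
  have scope_subset {k} (hk : k ∈ Kj') : s k ⊆ univ.erase j :=
    subset_erase.2 ⟨subset_univ _, (mem_filter.1 hk).2⟩
  have hP : DependsOnPair P (univ.erase j) (univ.erase j) := .prod fun k hk =>
    (h.dependsOnPair k (mem_of_mem hk)).mono (scope_subset hk) compl_subset
  have hN : DependsOnPair N (univ.erase j) (univ.erase j) := .prod fun k hk =>
    (h.dependsOnPair_majorant k (mem_of_mem hk)).mono (scope_subset hk) compl_subset
  have hQ : DependsOnPair Q univ (univ.erase j) := (hF.mono subset_rfl compl_subset).mul <|
    .prod fun k hk => (h.dependsOnPair k (mem_filter.1 hk).1).mono (subset_univ _) compl_subset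
  have expect_N_le : 𝔼 x, 𝔼 y, N x y ≤ C := by
    simpa using h.expect_cube_le ∅ (empty_subset _) Kj' (filter_subset _ _)
  have expect_N_nonneg : 0 ≤ 𝔼 x, 𝔼 y, N x y :=
    expect_nonneg fun x _ => expect_nonneg fun y _ => prod_nonneg fun k hk =>
      (h.nonneg k (mem_of_mem hk) x y).trans (h.le_majorant k (mem_of_mem hk) x y)
  calc (𝔼 x, 𝔼 y, F x y * ∏ k ∈ K, f k x y) ^ 2 = (𝔼 x, 𝔼 y, P x y * Q x y) ^ 2 :=
        congrArg (· ^ 2) <| expect_expect_congr fun x y => by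
          rw [← prod_filter_mul_prod_filter_not K (j ∈ s ·)]
          ring
    _ ≤ (𝔼 x, 𝔼 y, N x y) * 𝔼 x, 𝔼 y, N x y * double j Q x y :=
        sq_expect_mul_le_double hP hN hQ
          (fun x y => prod_nonneg fun k hk => h.nonneg k (mem_of_mem hk) x y)
          fun x y => prod_le_prod (fun k hk => h.nonneg k (mem_of_mem hk) x y)
            fun k hk => h.le_majorant k (mem_of_mem hk) x y
    _ ≤ C * |𝔼 x, 𝔼 y, N x y * double j Q x y| :=
        (mul_le_mul_of_nonneg_left (le_abs_self _) expect_N_nonneg).trans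
          (mul_le_mul_of_nonneg_right expect_N_le (abs_nonneg _))
    _ = _ := congrArg (C * |·|) <| expect_expect_congr fun x y => by
        simp only [ite_apply, prod_ite, double, prod_mul_distrib, N, Q, Kj, Kj']
        ring

theorem abs_expect_mul_prod_pow_le (hC : 0 < C) (h : IsMajorizedFamily e K s f M C)
    {F : (∀ i, α i) → (∀ i, α i) → ℝ} (hF : DependsOnPair F univ eᶜ) :
    (|𝔼 x, 𝔼 y, F x y * ∏ k ∈ K, f k x y| / C) ^ 2 ^ #e ≤
      |𝔼 x, 𝔼 y, cube e F x y * ∏ k ∈ K, cube (e ∩ s k) (M k) x y| / C := by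
  induction e using Finset.induction generalizing f M F with
  | empty =>
    simp only [card_empty, pow_zero, pow_one, empty_inter, cube_empty]
    simp +contextual only [h.eq_majorant _ _ (empty_subset _), le_refl]
  | insert j e hj ih =>
    let f' k := if j ∈ s k then double j (f k) else M k
    let M' k := if j ∈ s k then double j (M k) else M k
    have cube_majorant k : cube (e ∩ s k) (M' k) = cube (insert j e ∩ s k) (M k) := by
      by_cases hjk : j ∈ s k
      · simp only [M', if_pos hjk, insert_inter_of_mem hjk,
          cube_double fun hje => hj (mem_inter.1 hje).1]
      · simp only [M', if_neg hjk, insert_inter_of_notMem hjk]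
    have hF' : DependsOnPair (double j F) univ eᶜ :=
      hF.double (compl_subset_compl.2 (subset_insert j e)) (mem_compl.2 hj)
    calc (|𝔼 x, 𝔼 y, F x y * ∏ k ∈ K, f k x y| / C) ^ 2 ^ #(insert j e)
        = ((|𝔼 x, 𝔼 y, F x y * ∏ k ∈ K, f k x y| / C) ^ 2) ^ 2 ^ #e := by
          rw [card_insert_of_notMem hj, pow_succ', pow_mul]
      _ ≤ (|𝔼 x, 𝔼 y, double j F x y * ∏ k ∈ K, f' k x y| / C) ^ 2 ^ #e := by
          gcongr
          rw [div_pow, sq_abs, div_le_div_iff₀ (pow_pos hC 2) hC]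
          nlinarith only [h.sq_expect_mul_prod_le hF, hC]
      _ ≤ |𝔼 x, 𝔼 y, cube e (double j F) x y * ∏ k ∈ K, cube (e ∩ s k) (M' k) x y| / C :=
          ih (h.doubled hj) hF'
      _ = _ := by simp only [cube_double hj, cube_majorant]

end IsMajorizedFamily

end CauchySchwarz

section LinearForms

variable {ι : Type*} {α : ι → Type*}

/-- A weight on the edge `e` (a nonnegative function of the coordinates in `e`) that is bounded by
the sparse majorant `ν` or by `1`. -/
structure IsBoundedWeight (ν : (∀ i, α i) → ℝ) (e : Finset ι) (w : (∀ i, α i) → ℝ) : Prop where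
  dependsOn : DependsOn w e
  nonneg : 0 ≤ w
  le_or_le : w ≤ ν ∨ w ≤ 1

lemma IsBoundedWeight.exists_majorant {ν : (∀ i, α i) → ℝ} {e : Finset ι} {w : (∀ i, α i) → ℝ}
    (h : IsBoundedWeight ν e w) (hν : DependsOn ν e) :
    ∃ M : (∀ i, α i) → ℝ, DependsOn M e ∧ (M = ν ∨ M = 1) ∧ w ≤ M :=
  h.le_or_le.elim (fun hw => ⟨ν, hν, .inl rfl, hw⟩) fun hw => ⟨1, fun _ _ _ => rfl, .inr rfl, hw⟩

lemma exists_subset_prod_eq {Ω β : Type*} {ν N : Ω → ℝ} (hN : N = ν ∨ N = 1) (P : Finset β) :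
    ∃ T ⊆ P, ∀ z : β → Ω, ∏ A ∈ P, N (z A) = ∏ A ∈ T, ν (z A) := by
  rcases hN with rfl | rfl
  · exact ⟨P, subset_rfl, fun _ => rfl⟩
  · exact ⟨∅, empty_subset P, by simp⟩

variable [DecidableEq ι]

/-- `Φ` is the factor of an edge `e` of weight `ν` in one of the products of the linear forms
condition: a product of copies of `ν` at distinct vertices of the cube spanned by `x` and `y` in the
coordinates `e`. The vertex `ω ∈ {0,1}^e` is encoded as the subset of `e` where `ω = 1`. -/
def IsCubeFactor (ν : (∀ i, α i) → ℝ) (e : Finset ι) (Φ : (∀ i, α i) → (∀ i, α i) → ℝ) : Prop :=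
  ∃ T ⊆ e.powerset, ∀ x y, Φ x y = ∏ A ∈ T, ν (A.piecewise y x)

namespace IsCubeFactor

variable {ν : (∀ i, α i) → ℝ} {e e₁ : Finset ι}

lemma one : IsCubeFactor ν e fun _ _ => 1 := ⟨∅, empty_subset _, by simp⟩

lemma self : IsCubeFactor ν e fun x _ => ν x := ⟨{∅}, by simp, by simp⟩

lemma prod {T : Finset (Finset ι)} (hT : T ⊆ e.powerset) :
    IsCubeFactor ν e fun x y => ∏ A ∈ T, ν (A.piecewise y x) := ⟨T, hT, fun _ _ => rfl⟩

lemma cube_mul_piecewise (hν : DependsOn ν e) (he : ¬ e ⊆ e₁) {I : Finset ι} (hI : I ⊆ e₁)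
    {M M' : (∀ i, α i) → ℝ} (hM : M = ν ∨ M = 1) (hM' : M' = ν ∨ M' = 1) :
    IsCubeFactor ν e (cube (I ∩ e) fun x y => M x * M' (e₁.piecewise x y)) := by
  obtain ⟨T, hT, hTM⟩ := exists_subset_prod_eq hM (I ∩ e).powerset
  obtain ⟨T', hT', hTM'⟩ := exists_subset_prod_eq hM' (I ∩ e).powerset
  have subset_of_mem {A} {S : Finset (Finset ι)} (hS : S ⊆ (I ∩ e).powerset) (hA : A ∈ S) :
      A ⊆ e₁ ∧ A ⊆ e :=
    have hAI := subset_inter_iff.1 (mem_powerset.1 (hS hA))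
    ⟨hAI.1.trans hI, hAI.2⟩
  -- The vertices of the second factor differ from those of the first in the coordinates `e \ e₁`.
  have vertex_eq (A : Finset ι) (x y : ∀ i, α i) :
      ν (e₁.piecewise (A.piecewise y x) y) = ν ((A ∪ e \ e₁).piecewise y x) := by
    refine hν fun i hi => ?_
    by_cases hi₁ : i ∈ e₁
    · simp [piecewise, hi₁]
    · simp [piecewise, hi₁, mem_coe.1 hi]
  have vertex_injOn : Set.InjOn (· ∪ e \ e₁) (T' : Set (Finset ι)) := fun A hA B hB hAB => by
    have inter_eq {C} (hC : C ∈ T') : (C ∪ e \ e₁) ∩ e₁ = C := by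
      rw [union_inter_distrib_right, sdiff_inter_self, union_empty,
        inter_eq_left.2 (subset_of_mem hT' hC).1]
    rw [← inter_eq hA, ← inter_eq hB]
    exact congrArg (· ∩ e₁) hAB
  have vertices_disjoint : Disjoint T (T'.image (· ∪ e \ e₁)) := by
    refine disjoint_right.2 fun A hA hAT => ?_
    obtain ⟨B, -, rfl⟩ := mem_image.1 hA
    exact he (sdiff_eq_empty_iff_subset.1 (disjoint_self.1 (disjoint_sdiff_self_left.mono_right
      (subset_union_right.trans (subset_of_mem hT hAT).1))))
  refine ⟨T ∪ T'.image (· ∪ e \ e₁), ?_, fun x y => ?_⟩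
  · refine union_subset (fun A hA => mem_powerset.2 (subset_of_mem hT hA).2) fun A hA => ?_
    obtain ⟨B, hB, rfl⟩ := mem_image.1 hA
    exact mem_powerset.2 (union_subset (subset_of_mem hT' hB).2 sdiff_subset)
  · rw [prod_union vertices_disjoint, prod_image vertex_injOn, cube, prod_mul_distrib, hTM, hTM']
    exact congrArg _ (prod_congr rfl fun A _ => vertex_eq A x y)

end IsCubeFactor

variable [Fintype ι] [∀ i, Fintype (α i)]

/-- The `H`-linear forms condition within `η` for weights given as functions on the full product. -/
def LinearForms (H : Finset (Finset ι)) (ν : Finset ι → (∀ i, α i) → ℝ) (η : ℝ) : Prop :=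
  ∀ Φ : Finset ι → (∀ i, α i) → (∀ i, α i) → ℝ, (∀ e ∈ H, IsCubeFactor (ν e) e (Φ e)) →
    |𝔼 x, 𝔼 y, ∏ e ∈ H, Φ e x y - 1| ≤ η

lemma abs_sum_neg_one_pow_mul_le {β : Type*} [DecidableEq β] {P : Finset β} (hP : P.Nonempty)
    {L : Finset β → ℝ} {η : ℝ} (hL : ∀ R ⊆ P, |L R - 1| ≤ η) :
    |∑ t ∈ P.powerset, (-1) ^ #t * L (P \ t)| ≤ 2 ^ #P * η := by
  have alternating_sum : ∑ t ∈ P.powerset, (-1 : ℝ) ^ #t = 0 := by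
    exact_mod_cast sum_powerset_neg_one_pow_card_of_nonempty hP
  calc |∑ t ∈ P.powerset, (-1) ^ #t * L (P \ t)|
      = |∑ t ∈ P.powerset, (-1) ^ #t * (L (P \ t) - 1)| := by
        simp only [mul_sub, mul_one, sum_sub_distrib, alternating_sum, sub_zero]
    _ ≤ ∑ t ∈ P.powerset, |(-1) ^ #t * (L (P \ t) - 1)| := abs_sum_le_sum_abs _ _
    _ ≤ ∑ _t ∈ P.powerset, η := sum_le_sum fun _ _ => by
        simpa only [abs_mul, abs_neg_one_pow, one_mul] using hL _ sdiff_subset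
    _ = 2 ^ #P * η := by simp [card_powerset]

namespace LinearForms

variable {H K : Finset (Finset ι)} {e₁ : Finset ι} {ν : Finset ι → (∀ i, α i) → ℝ} {η η' : ℝ}
  {Φ : Finset ι → (∀ i, α i) → (∀ i, α i) → ℝ}

lemma mono (h : LinearForms H ν η) (hη : η ≤ η') : LinearForms H ν η' :=
  fun Φ hΦ => (h Φ hΦ).trans hη

lemma subset (h : LinearForms H ν η) (hK : K ⊆ H) : LinearForms K ν η := by
  intro Φ hΦ
  have := h (fun e => if e ∈ K then Φ e else fun _ _ => 1) fun e _ => by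
    split_ifs with he
    · exact hΦ e he
    · exact .one
  simpa only [ite_apply, prod_ite_mem, inter_eq_right.2 hK] using this

lemma update_one (h : LinearForms H ν η) (e₁ : Finset ι) : LinearForms H (update ν e₁ 1) η := by
  intro Φ hΦ
  have prod_eq x y : ∏ e ∈ H, Φ e x y = ∏ e ∈ H.erase e₁, Φ e x y := by
    by_cases he₁ : e₁ ∈ H
    · obtain ⟨T, -, hT⟩ := hΦ e₁ he₁
      exact (prod_erase H (by simp [hT])).symm
    · rw [erase_eq_of_notMem he₁]
  simp only [prod_eq]
  refine h.subset (erase_subset e₁ H) Φ fun e he => ?_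
  simpa only [update_of_ne (ne_of_mem_erase he)] using hΦ e (mem_of_mem_erase he)

lemma abs_expect_mul_prod_erase_sub_one_le (h : LinearForms H ν η) (he₁ : e₁ ∈ H)
    {Ψ : (∀ i, α i) → (∀ i, α i) → ℝ} (hΨ : IsCubeFactor (ν e₁) e₁ Ψ)
    (hΦ : ∀ e ∈ H.erase e₁, IsCubeFactor (ν e) e (Φ e)) :
    |𝔼 x, 𝔼 y, Ψ x y * ∏ e ∈ H.erase e₁, Φ e x y - 1| ≤ η := by
  have prod_eq x y : ∏ e ∈ H, update Φ e₁ Ψ e x y = Ψ x y * ∏ e ∈ H.erase e₁, Φ e x y := by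
    rw [← mul_prod_erase H _ he₁, update_self]
    exact congrArg _ (prod_congr rfl fun e he => by rw [update_of_ne (ne_of_mem_erase he)])
  simp only [← prod_eq]
  refine h _ fun e he => ?_
  rcases eq_or_ne e e₁ with rfl | hne
  · simpa only [update_self] using hΨ
  · simpa only [update_of_ne hne] using hΦ e (mem_erase.2 ⟨hne, he⟩)

lemma abs_expect_cube_sub_one_mul_prod_le (h : LinearForms H ν η) (he₁ : e₁ ∈ H)
    (hΦ : ∀ e ∈ H.erase e₁, IsCubeFactor (ν e) e (Φ e)) :
    |𝔼 x, 𝔼 y, cube e₁ (fun x _ => ν e₁ x - 1) x y * ∏ e ∈ H.erase e₁, Φ e x y| ≤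
      2 ^ 2 ^ #e₁ * η := by
  let L (R : Finset (Finset ι)) :=
    𝔼 x, 𝔼 y, (∏ A ∈ R, ν e₁ (A.piecewise y x)) * ∏ e ∈ H.erase e₁, Φ e x y
  have hL : ∀ R ⊆ e₁.powerset, |L R - 1| ≤ η := fun R hR =>
    h.abs_expect_mul_prod_erase_sub_one_le he₁ (.prod hR) hΦ
  calc |𝔼 x, 𝔼 y, cube e₁ (fun x _ => ν e₁ x - 1) x y * ∏ e ∈ H.erase e₁, Φ e x y|
      = |∑ t ∈ e₁.powerset.powerset, (-1) ^ #t * L (e₁.powerset \ t)| := by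
        simp only [cube, prod_sub, prod_const_one, mul_one, sum_mul, expect_sum_comm, L, mul_expect,
          mul_assoc]
    _ ≤ 2 ^ #e₁.powerset * η := abs_sum_neg_one_pow_mul_le ⟨∅, empty_mem_powerset e₁⟩ hL
    _ = 2 ^ 2 ^ #e₁ * η := by rw [card_powerset]

lemma abs_expect_sub_one_le [∀ i, Nonempty (α i)] (h : LinearForms H ν η) (he₁ : e₁ ∈ H) :
    |𝔼 x, ν e₁ x - 1| ≤ η := by
  simpa using h.abs_expect_mul_prod_erase_sub_one_le he₁ .self fun e _ => .one

theorem abs_expect_sub_one_mul_prod_pow_le [∀ i, Nonempty (α i)]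
    {w w' : Finset ι → (∀ i, α i) → ℝ} (h : LinearForms H ν η)
    (hη : η ≤ 1) (hν : ∀ e ∈ H, DependsOn (ν e) e)
    (hH : IsAntichain (· ⊆ ·) (H : Set (Finset ι))) (he₁ : e₁ ∈ H)
    (hw : ∀ e ∈ H.erase e₁, IsBoundedWeight (ν e) e (w e))
    (hw' : ∀ e ∈ H.erase e₁, IsBoundedWeight (ν e) e (w' e)) :
    (|𝔼 x, 𝔼 y, (ν e₁ x - 1) * ∏ e ∈ H.erase e₁, w e x * w' e (e₁.piecewise x y)| / 2) ^ 2 ^ #e₁ ≤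
      2 ^ 2 ^ #e₁ * η := by
  have hν' e (he : e ∈ H.erase e₁) : DependsOn (ν e) e := hν e (mem_of_mem_erase he)
  choose! M hM_dep hM hwM using fun e he => (hw e he).exists_majorant (hν' e he)
  choose! M' hM'_dep hM' hwM' using fun e he => (hw' e he).exists_majorant (hν' e he)
  have isCubeFactor {e} (he : e ∈ H.erase e₁) {I : Finset ι} (hI : I ⊆ e₁) :
      IsCubeFactor (ν e) e (cube (I ∩ e) fun x y => M e x * M' e (e₁.piecewise x y)) :=
    .cube_mul_piecewise (hν' e he)
      (hH (mem_of_mem_erase he) he₁ (ne_of_mem_erase he)) hI (hM e he) (hM' e he)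
  have family : IsMajorizedFamily e₁ (H.erase e₁) id
      (fun e x y => w e x * w' e (e₁.piecewise x y))
      (fun e x y => M e x * M' e (e₁.piecewise x y)) 2 := by
    refine ⟨?_, ?_, ?_, ?_, ?_, ?_⟩
    · exact fun e he => dependsOnPair_mul_piecewise (hw e he).dependsOn (hw' e he).dependsOn
    · exact fun e he => dependsOnPair_mul_piecewise (hM_dep e he) (hM'_dep e he)
    · exact fun e he x y => mul_nonneg ((hw e he).nonneg _) ((hw' e he).nonneg _)
    · exact fun e he x y => mul_le_mul (hwM e he _) (hwM' e he _) ((hw' e he).nonneg _)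
        (((hw e he).nonneg _).trans (hwM e he _))
    · exact fun e he hsub => absurd hsub (hH he₁ (mem_of_mem_erase he) (ne_of_mem_erase he).symm)
    · exact fun I hI K hK => by
        have := le_of_abs_le <| (h.subset (hK.trans (erase_subset e₁ H))) _ fun e he =>
          isCubeFactor (hK he) hI
        simp only [id]
        linarith only [hη, this]
  have hF : DependsOnPair (fun x _ => ν e₁ x - 1) univ e₁ᶜ := fun x x' _ _ hx _ => by
    rw [funext fun i => hx i (mem_univ i)]
  calc _ ≤ |𝔼 x, 𝔼 y, cube e₁ (fun x _ => ν e₁ x - 1) x y * ∏ e ∈ H.erase e₁,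
          cube (e₁ ∩ e) (fun x y => M e x * M' e (e₁.piecewise x y)) x y| / 2 :=
        family.abs_expect_mul_prod_pow_le two_pos hF
    _ ≤ 2 ^ 2 ^ #e₁ * η := (half_le_self (abs_nonneg _)).trans <|
        h.abs_expect_cube_sub_one_mul_prod_le he₁ fun e he => isCubeFactor he subset_rfl

end LinearForms

end LinearForms

section Densification

variable {ι : Type*} {α : ι → Type*} [DecidableEq ι] [Fintype ι] [∀ i, Fintype (α i)]
  {H : Finset (Finset ι)} {e₁ : Finset ι} {w w' : Finset ι → (∀ i, α i) → ℝ}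

/-- The normalized count `E[∏_{e ∈ H} w_e]` of the copies of `H` in a weighted hypergraph `w`. -/
noncomputable def weightedCount (H : Finset (Finset ι)) (w : Finset ι → (∀ i, α i) → ℝ) : ℝ :=
  𝔼 x, ∏ e ∈ H, w e x

/-- The densified weight on the edge `e₁`: the conditional expectation, given the coordinates in
`e₁`, of the product of the weights of the other edges. -/
noncomputable def densified (H : Finset (Finset ι)) (e₁ : Finset ι)
    (w : Finset ι → (∀ i, α i) → ℝ) : (∀ i, α i) → ℝ :=
  condAvg e₁ fun x => ∏ e ∈ H.erase e₁, w e x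

lemma weightedCount_congr (h : Set.EqOn w w' H) : weightedCount H w = weightedCount H w' :=
  expect_congr rfl fun x _ => prod_congr rfl fun _ he => congrFun (h he) x

lemma densified_dependsOn (H : Finset (Finset ι)) (e₁ : Finset ι)
    (w : Finset ι → (∀ i, α i) → ℝ) : DependsOn (densified H e₁ w) e₁ := condAvg_dependsOn _ _

lemma densified_nonneg (hw : ∀ e ∈ H.erase e₁, 0 ≤ w e) : 0 ≤ densified H e₁ w :=
  fun _ => expect_nonneg fun _ _ => prod_nonneg fun e he => hw e he _

lemma densified_mono (hw : ∀ e ∈ H.erase e₁, 0 ≤ w e) (hww' : ∀ e ∈ H.erase e₁, w e ≤ w' e) :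
    densified H e₁ w ≤ densified H e₁ w' :=
  fun _ => expect_le_expect fun _ _ => prod_le_prod (fun e he => hw e he _) fun e he => hww' e he _

variable [∀ i, Nonempty (α i)]

lemma densified_le_one (hw : ∀ e ∈ H.erase e₁, 0 ≤ w e) (hw1 : ∀ e ∈ H.erase e₁, w e ≤ 1) :
    densified H e₁ w ≤ 1 :=
  fun _ => expect_le univ_nonempty fun _ _ =>
    prod_le_one (fun e he => hw e he _) fun e he => hw1 e he _

lemma weightedCount_update (he₁ : e₁ ∈ H) {c : (∀ i, α i) → ℝ} (hc : DependsOn c e₁)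
    (w : Finset ι → (∀ i, α i) → ℝ) :
    weightedCount H (update w e₁ c) = 𝔼 x, c x * densified H e₁ w x := by
  rw [densified, expect_mul_condAvg hc]
  refine expect_congr rfl fun x _ => ?_
  rw [← mul_prod_erase H _ he₁, update_self]
  exact congrArg _ (prod_congr rfl fun e he => by rw [update_of_ne (ne_of_mem_erase he)])

lemma weightedCount_eq_expect_mul_densified (he₁ : e₁ ∈ H) (hw : DependsOn (w e₁) e₁) :
    weightedCount H w = 𝔼 x, w e₁ x * densified H e₁ w x := by
  simpa only [update_eq_self] using weightedCount_update he₁ hw w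

lemma weightedCount_sub_weightedCount (he₁ : e₁ ∈ H) (hw : DependsOn (w e₁) e₁)
    (hw' : DependsOn (w' e₁) e₁) :
    weightedCount H w - weightedCount H w' =
      𝔼 x, w e₁ x * (densified H e₁ w x - densified H e₁ w' x) +
        𝔼 x, (w e₁ x - w' e₁ x) * densified H e₁ w' x := by
  rw [weightedCount_eq_expect_mul_densified he₁ hw, weightedCount_eq_expect_mul_densified he₁ hw',
    ← expect_sub_distrib, ← expect_add_distrib]
  exact expect_congr rfl fun x _ => by ring

namespace LinearForms

variable {ν : Finset ι → (∀ i, α i) → ℝ} {η τ : ℝ}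

lemma expect_densified_sub_one_sq_le (h : LinearForms H ν η) (hν : ∀ e ∈ H, DependsOn (ν e) e)
    (hH : IsAntichain (· ⊆ ·) (H : Set (Finset ι))) (he₁ : e₁ ∈ H) :
    𝔼 x, (densified H e₁ ν x - 1) ^ 2 ≤ 3 * η := by
  let n := densified H e₁ ν
  have h' : LinearForms (H.erase e₁) ν η := h.subset (erase_subset e₁ H)
  have first_moment : |𝔼 x, n x - 1| ≤ η := by
    have := h' _ fun e _ => IsCubeFactor.self
    simpa only [Fintype.expect_const, n, densified, expect_condAvg] using this
  have second_moment : |𝔼 x, n x * n x - 1| ≤ η := by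
    have := h' _ fun e he => IsCubeFactor.cube_mul_piecewise (hν e (mem_of_mem_erase he))
      (hH (mem_of_mem_erase he) he₁ (ne_of_mem_erase he)) (empty_subset e₁) (.inl rfl) (.inl rfl)
    have moment_eq := expect_mul_condAvg_mul_condAvg (c := fun _ => 1) (e := e₁)
      (fun _ _ _ => rfl) (fun x => ∏ e ∈ H.erase e₁, ν e x) fun x => ∏ e ∈ H.erase e₁, ν e x
    simp only [one_mul, ← prod_mul_distrib] at moment_eq
    simpa only [empty_inter, cube_empty, ← moment_eq, n, densified] using this
  have expand : 𝔼 x, (n x - 1) ^ 2 = (𝔼 x, n x * n x - 1) - 2 * (𝔼 x, n x - 1) := by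
    have expect_one : 𝔼 _x : ∀ i, α i, (1 : ℝ) = 1 := Fintype.expect_const 1
    calc 𝔼 x, (n x - 1) ^ 2 = 𝔼 x, (n x * n x - 2 * n x + 1) :=
          expect_congr rfl fun x _ => by ring
      _ = 𝔼 x, n x * n x - 2 * 𝔼 x, n x + 1 := by
          rw [expect_add_distrib, expect_sub_distrib, ← mul_expect, expect_one]
      _ = _ := by ring
  linarith only [expand, (abs_le.1 first_moment).1, (abs_le.1 second_moment).2]

lemma abs_expect_sub_one_mul_densified_mul_le (h : LinearForms H ν η)
    (hν : ∀ e ∈ H, DependsOn (ν e) e) (hH : IsAntichain (· ⊆ ·) (H : Set (Finset ι)))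
    (he₁ : e₁ ∈ H) (hτ : 0 ≤ τ) (hη : η ≤ 1) (hητ : 2 ^ 2 ^ #e₁ * η ≤ (τ / 2) ^ 2 ^ #e₁)
    (hw : ∀ e ∈ H.erase e₁, IsBoundedWeight (ν e) e (w e))
    (hw' : ∀ e ∈ H.erase e₁, IsBoundedWeight (ν e) e (w' e)) :
    |𝔼 x, (ν e₁ x - 1) * (densified H e₁ w x * densified H e₁ w' x)| ≤ τ := by
  have hν₁ : DependsOn (fun x => ν e₁ x - 1) e₁ := fun _ _ hxy =>
    congrArg (· - 1) (hν e₁ he₁ hxy)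
  have half_le_half := le_of_pow_le_pow_left₀ (pow_ne_zero _ two_ne_zero) (by positivity)
    ((h.abs_expect_sub_one_mul_prod_pow_le hη hν hH he₁ hw hw').trans hητ)
  simp only [densified, expect_mul_condAvg_mul_condAvg hν₁, ← prod_mul_distrib]
  linarith only [half_le_half]

end LinearForms

end Densification

section LayerCake

variable {Ω κ : Type*} [Fintype Ω] {ε : ℝ}

lemma integral_ite_le_eq_self {w : ℝ} (hw : w ∈ Set.Icc (0 : ℝ) 1) :
    ∫ t in (0 : ℝ)..1, (if t ≤ w then 1 else 0 : ℝ) = w := by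
  have := intervalIntegral.integral_indicator (μ := MeasureTheory.volume) (f := fun _ => (1 : ℝ)) hw
  simpa [Set.indicator_apply] using this

lemma intervalIntegrable_ite_le (w : ℝ) :
    IntervalIntegrable (fun t => if t ≤ w then 1 else 0 : ℝ → ℝ) MeasureTheory.volume 0 1 :=
  Antitone.intervalIntegrable fun s t hst => by
    split_ifs with ht hs
    exacts [le_rfl, absurd (hst.trans ht) hs, zero_le_one, le_rfl]

lemma abs_expect_mul_le_of_superlevel {c w : Ω → ℝ} (hw : ∀ x, w x ∈ Set.Icc (0 : ℝ) 1)
    (h : ∀ t : ℝ, |𝔼 x, c x * if t ≤ w x then 1 else 0| ≤ ε) : |𝔼 x, c x * w x| ≤ ε := by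
  have layer_cake : 𝔼 x, c x * w x = ∫ t in (0 : ℝ)..1, 𝔼 x, c x * if t ≤ w x then 1 else 0 := by
    simp only [Fintype.expect_eq_sum_div_card, intervalIntegral.integral_div]
    rw [intervalIntegral.integral_finsetSum fun x _ =>
      (intervalIntegrable_ite_le (w x)).const_mul (c x)]
    simp only [intervalIntegral.integral_const_mul, integral_ite_le_eq_self (hw _)]
  rw [layer_cake]
  simpa using intervalIntegral.norm_integral_le_of_norm_le_const (a := (0 : ℝ)) (b := 1)
    (f := fun t => 𝔼 x, c x * if t ≤ w x then 1 else 0) fun t _ => h t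

lemma abs_expect_mul_prod_le_of_superlevel {s : Finset κ} {f : Ω → ℝ} {u : κ → Ω → ℝ}
    (hu : ∀ k ∈ s, ∀ x, u k x ∈ Set.Icc (0 : ℝ) 1)
    (h : ∀ t : κ → ℝ, |𝔼 x, f x * ∏ k ∈ s, if t k ≤ u k x then 1 else 0| ≤ ε) :
    |𝔼 x, f x * ∏ k ∈ s, u k x| ≤ ε := by
  classical
  induction s using Finset.induction generalizing f with
  | empty => simpa using h 0
  | insert k s hk ih =>
    have prod_eq x : f x * ∏ k ∈ insert k s, u k x = (f x * ∏ k ∈ s, u k x) * u k x := by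
      rw [prod_insert hk]
      ring
    simp only [prod_eq]
    refine abs_expect_mul_le_of_superlevel (hu k (mem_insert_self k s)) fun t₀ => ?_
    simp only [mul_right_comm (f _)]
    refine ih (fun l hl => hu l (mem_insert_of_mem hl)) fun t => ?_
    refine (congrArg abs (expect_congr rfl fun x _ => ?_)).trans_le (h (update t k t₀))
    rw [prod_insert hk, update_self, mul_assoc]
    exact congrArg _ <| congrArg _ <| prod_congr rfl fun l hl => by
      rw [update_of_ne (ne_of_mem_of_not_mem hl hk)]

end LayerCake

section Discrepancy

variable {ι : Type*} {α : ι → Type*} [Fintype ι] [DecidableEq ι] [∀ i, Fintype (α i)]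

/-- The average of `f` against any product of `[0,1]`-valued functions of the coordinates in the
faces of `e` is at most `ε` in absolute value. -/
def DiscrepancyLE (e : Finset ι) (f : (∀ i, α i) → ℝ) (ε : ℝ) : Prop :=
  ∀ u : ι → (∀ i, α i) → ℝ, (∀ j ∈ e, DependsOn (u j) (e.erase j : Finset ι)) →
    (∀ j ∈ e, ∀ x, u j x ∈ Set.Icc (0 : ℝ) 1) → |𝔼 x, f x * ∏ j ∈ e, u j x| ≤ ε

namespace DiscrepancyLE

variable {e e₁ : Finset ι} {f : (∀ i, α i) → ℝ} {ε : ℝ}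

lemma mono {ε' : ℝ} (h : DiscrepancyLE e f ε) (hε : ε ≤ ε') : DiscrepancyLE e f ε' :=
  fun u hu hu' => (h u hu hu').trans hε

lemma abs_expect_mul_prod_piecewise_le {K : Finset (Finset ι)} (h : DiscrepancyLE e₁ f ε)
    (hK : ∀ e ∈ K, ¬ e₁ ⊆ e) {g : Finset ι → (∀ i, α i) → ℝ} (hg : ∀ e ∈ K, DependsOn (g e) e)
    (hg01 : ∀ e ∈ K, ∀ x, g e x ∈ Set.Icc (0 : ℝ) 1) (y : ∀ i, α i) :
    |𝔼 x, f x * ∏ e ∈ K, g e (e₁.piecewise x y)| ≤ ε := by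
  choose j hj hj' using fun e : K => not_subset.1 (hK e e.2)
  let u i x := ∏ e : K with j e = i, g e (e₁.piecewise x y)
  have prod_eq x : ∏ e ∈ K, g e (e₁.piecewise x y) = ∏ i ∈ e₁, u i x := by
    rw [← prod_coe_sort K, prod_fiberwise_of_maps_to fun e _ => hj e]
  simp only [prod_eq]
  refine h u (fun i _ => dependsOn_prod fun e he x x' hxx' => ?_) fun i _ x => ?_
  · obtain rfl := (mem_filter.1 he).2
    refine hg e e.2 fun l hl => ?_
    by_cases hl₁ : l ∈ e₁
    · simpa only [piecewise_eq_of_mem e₁ _ _ hl₁] using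
        hxx' l (mem_erase.2 ⟨ne_of_mem_of_not_mem hl (hj' e), hl₁⟩)
    · simp only [piecewise_eq_of_notMem e₁ _ _ hl₁]
  · exact ⟨prod_nonneg fun e _ => (hg01 e e.2 _).1,
      prod_le_one (fun e _ => (hg01 e e.2 _).1) fun e _ => (hg01 e e.2 _).2⟩

lemma abs_expect_mul_prod_le [∀ i, Nonempty (α i)] {K : Finset (Finset ι)}
    (h : DiscrepancyLE e₁ f ε) (hf : DependsOn f e₁) (hK : ∀ e ∈ K, ¬ e₁ ⊆ e)
    {g : Finset ι → (∀ i, α i) → ℝ} (hg : ∀ e ∈ K, DependsOn (g e) e)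
    (hg01 : ∀ e ∈ K, ∀ x, g e x ∈ Set.Icc (0 : ℝ) 1) : |𝔼 x, f x * ∏ e ∈ K, g e x| ≤ ε :=
  calc |𝔼 x, f x * ∏ e ∈ K, g e x|
      = |𝔼 y, 𝔼 x, f x * ∏ e ∈ K, g e (e₁.piecewise x y)| := by
        rw [← expect_expect_piecewise e₁, expect_comm]
        simp only [dependsOn_piecewise hf]
    _ ≤ 𝔼 y, |𝔼 x, f x * ∏ e ∈ K, g e (e₁.piecewise x y)| := abs_expect_le _ _
    _ ≤ 𝔼 _y : ∀ i, α i, ε := expect_le_expect fun y _ =>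
        h.abs_expect_mul_prod_piecewise_le hK hg hg01 y
    _ = ε := Fintype.expect_const ε

end DiscrepancyLE

end Discrepancy

section SparsePart

variable {Ω : Type*} [Fintype Ω] {G N a b n : Ω → ℝ} {τ : ℝ}

lemma expect_sub_mul_sub_min_le [Nonempty Ω] (ha : 0 ≤ a) (han : a ≤ n) (hb : 0 ≤ b) (hτ : 0 ≤ τ)
    (hn : 𝔼 x, (n x - 1) ^ 2 ≤ τ ^ 2) : 𝔼 x, (a x - b x) * (a x - min (a x) 1) ≤ τ ^ 2 + τ := by
  have pointwise x : (a x - b x) * (a x - min (a x) 1) ≤ (n x - 1) ^ 2 + |n x - 1| := by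
    rcases le_total (a x) 1 with h1 | h1
    · rw [min_eq_left h1, sub_self, mul_zero]
      positivity
    · rw [min_eq_right h1]
      calc (a x - b x) * (a x - 1) ≤ n x * (n x - 1) :=
            mul_le_mul ((sub_le_self _ (hb x)).trans (han x)) (sub_le_sub_right (han x) 1)
              (sub_nonneg.2 h1) ((ha x).trans (han x))
        _ = (n x - 1) ^ 2 + (n x - 1) := by ring
        _ ≤ (n x - 1) ^ 2 + |n x - 1| := by gcongr; exact le_abs_self _
  calc 𝔼 x, (a x - b x) * (a x - min (a x) 1) ≤ 𝔼 x, ((n x - 1) ^ 2 + |n x - 1|) :=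
        expect_le_expect fun x _ => pointwise x
    _ = 𝔼 x, (n x - 1) ^ 2 + 𝔼 x, |n x - 1| := expect_add_distrib _ _ _
    _ ≤ τ ^ 2 + τ := add_le_add hn <|
        le_of_sq_le_sq ((sq_expect_abs_le fun x => n x - 1).trans hn) hτ

lemma expect_sub_sq_le [Nonempty Ω] (ha : 0 ≤ a) (han : a ≤ n) (hb : 0 ≤ b) (hτ : 0 ≤ τ)
    (hn : 𝔼 x, (n x - 1) ^ 2 ≤ τ ^ 2)
    (hca : |𝔼 x, min (a x) 1 * a x - 𝔼 x, min (a x) 1 * b x| ≤ τ)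
    (hcb : |𝔼 x, b x * a x - 𝔼 x, b x * b x| ≤ τ) : 𝔼 x, (a x - b x) ^ 2 ≤ τ ^ 2 + 3 * τ := by
  have expand : 𝔼 x, (a x - b x) ^ 2 = 𝔼 x, (a x - b x) * (a x - min (a x) 1) +
      ((𝔼 x, min (a x) 1 * a x - 𝔼 x, min (a x) 1 * b x) -
        (𝔼 x, b x * a x - 𝔼 x, b x * b x)) := by
    simp only [← expect_sub_distrib, ← expect_add_distrib]
    exact expect_congr rfl fun x _ => by ring
  linarith only [expand, expect_sub_mul_sub_min_le ha han hb hτ hn, (abs_le.1 hca).2,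
    (abs_le.1 hcb).1]

lemma sq_expect_mul_sub_le (hG : 0 ≤ G) (hGN : G ≤ N) (hN : 𝔼 x, N x ≤ 2)
    (haa : |𝔼 x, (N x - 1) * (a x * a x)| ≤ τ) (hab : |𝔼 x, (N x - 1) * (a x * b x)| ≤ τ)
    (hbb : |𝔼 x, (N x - 1) * (b x * b x)| ≤ τ) :
    (𝔼 x, G x * (a x - b x)) ^ 2 ≤ 2 * (4 * τ + 𝔼 x, (a x - b x) ^ 2) := by
  have expand : 𝔼 x, N x * (a x - b x) ^ 2 = (𝔼 x, (N x - 1) * (a x * a x) -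
      2 * 𝔼 x, (N x - 1) * (a x * b x) + 𝔼 x, (N x - 1) * (b x * b x)) + 𝔼 x, (a x - b x) ^ 2 := by
    simp only [mul_expect, ← expect_sub_distrib, ← expect_add_distrib]
    exact expect_congr rfl fun x _ => by ring
  calc (𝔼 x, G x * (a x - b x)) ^ 2 ≤ (𝔼 x, G x) * 𝔼 x, G x * (a x - b x) ^ 2 :=
        sq_expect_mul_le hG _
    _ ≤ 2 * 𝔼 x, N x * (a x - b x) ^ 2 := by
        refine mul_le_mul ((expect_le_expect fun x _ => hGN x).trans hN) ?_ ?_ zero_le_two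
        · exact expect_le_expect fun x _ => mul_le_mul_of_nonneg_right (hGN x) (sq_nonneg _)
        · exact expect_nonneg fun x _ => mul_nonneg (hG x) (sq_nonneg _)
    _ ≤ 2 * (4 * τ + 𝔼 x, (a x - b x) ^ 2) := by
        linarith only [expand, (abs_le.1 haa).2, (abs_le.1 hab).1, (abs_le.1 hbb).2]

end SparsePart

section Restriction

variable {ι : Type} {α : ι → Type} {e : Finset ι}

lemma restr_dependsOn {β : Type*} (f : (∀ i : ↥e, α i) → β) :
    DependsOn (fun x => f (restr e x)) e :=
  fun _ _ h => congrArg f <| funext fun i => h i i.2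

variable [DecidableEq ι]

lemma faceProj_restr_mem_image_iff {j : ι} {S : Set (∀ i, α i)}
    (hS : DependsOn (· ∈ S) (e.erase j : Finset ι)) (x : ∀ i, α i) :
    faceProj j (restr e x) ∈ restr (e.erase j) '' S ↔ x ∈ S := by
  refine ⟨fun ⟨y, hy, hyx⟩ => ?_, fun hx => ⟨x, hx, rfl⟩⟩
  exact (hS fun i hi => congrFun hyx ⟨i, hi⟩).mp hy

lemma exists_prod_ite_eq_of_isCubeFactor (ν : (∀ i : ↥e, α i) → ℝ)
    {Φ : (∀ i, α i) → (∀ i, α i) → ℝ} (hΦ : IsCubeFactor (fun x => ν (restr e x)) e Φ) :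
    ∃ n : (↥e → Bool) → Bool, ∀ x y,
      ∏ ω, (if n ω then ν (fun i => if ω i then y i else x i) else 1) = Φ x y := by
  obtain ⟨T, hT, hΦT⟩ := hΦ
  let vertex (ω : ↥e → Bool) : Finset ι := ({i | ω i = true} : Finset ↥e).map (Embedding.subtype _)
  have mem_vertex (ω : ↥e → Bool) (i : ↥e) : i.1 ∈ vertex ω ↔ ω i = true := by simp [vertex]
  have vertex_injective : Injective vertex := fun ω ω' hω => funext fun i => by
    rw [Bool.eq_iff_iff, ← mem_vertex, ← mem_vertex, hω]
  have vertex_mem {A : Finset ι} (hA : A ⊆ e) : vertex (fun i => i.1 ∈ A) = A := by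
    ext i
    simpa [vertex] using @hA i
  refine ⟨fun ω => vertex ω ∈ T, fun x y => ?_⟩
  simp only [decide_eq_true_eq]
  rw [hΦT, ← prod_filter]
  refine prod_bij (fun ω _ => vertex ω) (fun ω hω => (mem_filter.1 hω).2)
    (fun _ _ _ _ hω => vertex_injective hω) (fun A hA => ?_) fun ω _ => ?_
  · have hAe := vertex_mem (mem_powerset.1 (hT hA))
    exact ⟨fun i => i.1 ∈ A, by rwa [mem_filter_univ, hAe], hAe⟩
  · refine congrArg ν <| funext fun i => ?_
    simp only [restr, piecewise, mem_vertex]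

variable [Fintype ι] [∀ i, Fintype (α i)]

lemma LinearForms.of_hLinearForms {H : Finset (Finset ι)} {ν : (e : Finset ι) → (∀ i : ↥e, α i) → ℝ}
    {η : ℝ} (h : HLinearForms H ν η) : LinearForms H (fun e x => ν e (restr e x)) η := by
  intro Φ hΦ
  choose! n hn using fun e he => exists_prod_ite_eq_of_isCubeFactor (ν e) (hΦ e he)
  have := h n
  rw [avg_eq_expect, expect_prodType fun x y : ∀ i, α i => ∏ e ∈ H, ∏ ω : ↥e → Bool,
    if n e ω then ν e (fun i => if ω i then y i.1 else x i.1) else 1] at this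
  exact this.trans_eq' <| congrArg (|· - 1|) <| expect_expect_congr fun x y =>
    prod_congr rfl fun e he => hn e he x y

variable [∀ i, Nonempty (α i)]

lemma expect_restr (f : (∀ i : ↥e, α i) → ℝ) : 𝔼 x, f (restr e x) = 𝔼 z, f z :=
  calc 𝔼 x, f (restr e x) = 𝔼 p : (∀ i : ↥e, α i) × ∀ i : {i // i ∉ e}, α i, f p.1 :=
        Fintype.expect_equiv (Equiv.piEquivPiSubtypeProd (· ∈ e) α) _ _ fun _ => rfl
    _ = 𝔼 z, f z := by
        rw [expect_prodType fun (z : ∀ i : ↥e, α i) (_ : ∀ i : {i // i ∉ e}, α i) => f z]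
        simp only [Fintype.expect_const]

lemma DiscrepancyLE.of_edgeDiscrepancy {g g' : (∀ i : ↥e, α i) → ℝ} {ε : ℝ}
    (h : EdgeDiscrepancy e g g' ε) :
    DiscrepancyLE e (fun x => g (restr e x) - g' (restr e x)) ε := by
  classical
  refine fun u hu hu01 => abs_expect_mul_prod_le_of_superlevel hu01 fun t => ?_
  have test := h fun j => restr (e.erase j) '' {x | t j ≤ u j x}
  rw [avg_eq_expect, ← expect_restr] at test
  refine test.trans_eq' <| congrArg abs <| expect_congr rfl fun x _ => congrArg _ <|
    prod_congr rfl fun j hj => ?_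
  have superlevel_dependsOn : DependsOn (· ∈ {x | t j ≤ u j x}) (e.erase j : Finset ι) :=
    fun x y hxy => congrArg (t j ≤ ·) (hu j hj hxy)
  rw [Set.indicator_apply]
  exact if_congr (faceProj_restr_mem_image_iff superlevel_dependsOn x) rfl rfl

end Restriction

section Transference

variable {ι : Type*} {α : ι → Type*} [DecidableEq ι] [Fintype ι] [∀ i, Fintype (α i)]

/-- The hypotheses of the counting lemma on the weights of a single edge `e`, given as functions on
the full product: a sparse weight `g` below the majorant `ν` and a dense weight `g'` forming an
`ε`-discrepancy pair. -/
structure IsSparseDenseEdge (e : Finset ι) (ν g g' : (∀ i, α i) → ℝ) (ε : ℝ) : Prop where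
  dependsOn_majorant : DependsOn ν e
  dependsOn_sparse : DependsOn g e
  dependsOn_dense : DependsOn g' e
  sparse_nonneg : 0 ≤ g
  sparse_le : g ≤ ν
  dense_nonneg : 0 ≤ g'
  dense_le_one : g' ≤ 1
  discrepancy : DiscrepancyLE e (g - g') ε

namespace IsSparseDenseEdge

variable {e : Finset ι} {ν g g' : (∀ i, α i) → ℝ} {ε : ℝ}

lemma of_le_one (hε : 0 ≤ ε) (hg : DependsOn g e) (hg0 : 0 ≤ g) (hg1 : g ≤ 1) :
    IsSparseDenseEdge e 1 g g ε :=
  ⟨fun _ _ _ => rfl, hg, hg, hg0, hg1, hg0, hg1, fun u _ _ => by simpa using hε⟩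

lemma isBoundedWeight_sparse (h : IsSparseDenseEdge e ν g g' ε) : IsBoundedWeight ν e g :=
  ⟨h.dependsOn_sparse, h.sparse_nonneg, .inl h.sparse_le⟩

lemma isBoundedWeight_dense (h : IsSparseDenseEdge e ν g g' ε) : IsBoundedWeight ν e g' :=
  ⟨h.dependsOn_dense, h.dense_nonneg, .inr h.dense_le_one⟩

end IsSparseDenseEdge

/-- The hypotheses of the counting lemma, for weights given as functions on the full product. -/
structure IsSparseDensePair (H : Finset (Finset ι)) (ν g g' : Finset ι → (∀ i, α i) → ℝ)
    (ε η : ℝ) : Prop where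
  edge : ∀ e ∈ H, IsSparseDenseEdge e (ν e) (g e) (g' e) ε
  linearForms : LinearForms H ν η

namespace IsSparseDensePair

variable {H : Finset (Finset ι)} {e₁ : Finset ι} {ν g g' : Finset ι → (∀ i, α i) → ℝ}
  {c : (∀ i, α i) → ℝ} {ε ε' η η' τ : ℝ}

lemma mono (h : IsSparseDensePair H ν g g' ε η) (hε : ε ≤ ε') (hη : η ≤ η') :
    IsSparseDensePair H ν g g' ε' η' :=
  ⟨fun e he => { h.edge e he with discrepancy := (h.edge e he).discrepancy.mono hε },
    h.linearForms.mono hη⟩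

lemma update_edge (h : IsSparseDensePair H ν g g' ε η) (hε : 0 ≤ ε) (hc : DependsOn c e₁)
    (hc0 : 0 ≤ c) (hc1 : c ≤ 1) :
    IsSparseDensePair H (update ν e₁ 1) (update g e₁ c) (update g' e₁ c) ε η := by
  refine ⟨fun e he => ?_, h.linearForms.update_one e₁⟩
  rcases eq_or_ne e e₁ with rfl | hne
  · simpa only [update_self] using .of_le_one hε hc hc0 hc1
  · simpa only [update_of_ne hne] using h.edge e he

variable [∀ i, Nonempty (α i)]

lemma abs_expect_sub_mul_densified_le (h : IsSparseDensePair H ν g g' ε η)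
    (hH : IsAntichain (· ⊆ ·) (H : Set (Finset ι))) (he₁ : e₁ ∈ H) :
    |𝔼 x, (g e₁ x - g' e₁ x) * densified H e₁ g' x| ≤ ε := by
  have h₁ := h.edge e₁ he₁
  have hsub : DependsOn (g e₁ - g' e₁) e₁ := fun _ _ hxy =>
    congrArg₂ (· - ·) (h₁.dependsOn_sparse hxy) (h₁.dependsOn_dense hxy)
  rw [densified]
  refine (congrArg abs (expect_mul_condAvg hsub _)).trans_le <|
    h₁.discrepancy.abs_expect_mul_prod_le hsub ?_ ?_ ?_
  · exact fun e he => hH he₁ (mem_of_mem_erase he) (ne_of_mem_erase he).symm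
  · exact fun e he => (h.edge e (mem_of_mem_erase he)).dependsOn_dense
  · exact fun e he x => ⟨(h.edge e (mem_of_mem_erase he)).dense_nonneg x,
      (h.edge e (mem_of_mem_erase he)).dense_le_one x⟩

lemma sq_expect_mul_sub_densified_le (h : IsSparseDensePair H ν g g' ε η)
    (hH : IsAntichain (· ⊆ ·) (H : Set (Finset ι))) (he₁ : e₁ ∈ H) (hτ : 0 ≤ τ) (hτ1 : τ ≤ 1)
    (hη : η ≤ 1) (hητ : 3 * η ≤ τ ^ 2) (hητ' : 2 ^ 2 ^ #e₁ * η ≤ (τ / 2) ^ 2 ^ #e₁)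
    (hcount : ∀ c : (∀ i, α i) → ℝ, DependsOn c e₁ → 0 ≤ c → c ≤ 1 →
      |weightedCount H (update g e₁ c) - weightedCount H (update g' e₁ c)| ≤ τ) :
    (𝔼 x, g e₁ x * (densified H e₁ g x - densified H e₁ g' x)) ^ 2 ≤ 16 * τ := by
  let a := densified H e₁ g
  let b := densified H e₁ g'
  have h' e (he : e ∈ H.erase e₁) := h.edge e (mem_of_mem_erase he)
  have hν e (he : e ∈ H) : DependsOn (ν e) e := (h.edge e he).dependsOn_majorant
  have hg e (he : e ∈ H.erase e₁) := (h' e he).isBoundedWeight_sparse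
  have hg' e (he : e ∈ H.erase e₁) := (h' e he).isBoundedWeight_dense
  have ha : 0 ≤ a := densified_nonneg fun e he => (h' e he).sparse_nonneg
  have han : a ≤ densified H e₁ ν :=
    densified_mono (fun e he => (h' e he).sparse_nonneg) fun e he => (h' e he).sparse_le
  have hb : 0 ≤ b := densified_nonneg fun e he => (h' e he).dense_nonneg
  have hb1 : b ≤ 1 :=
    densified_le_one (fun e he => (h' e he).dense_nonneg) fun e he => (h' e he).dense_le_one
  have hcount' (c : (∀ i, α i) → ℝ) (hc : DependsOn c e₁) (hc0 : 0 ≤ c) (hc1 : c ≤ 1) :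
      |𝔼 x, c x * a x - 𝔼 x, c x * b x| ≤ τ := by
    simpa only [weightedCount_update he₁ hc] using hcount c hc hc0 hc1
  have cap_dependsOn : DependsOn (fun x => min (a x) 1) e₁ := fun _ _ hxy =>
    congrArg (min · 1) (densified_dependsOn H e₁ g hxy)
  have expect_sub_sq : 𝔼 x, (a x - b x) ^ 2 ≤ τ ^ 2 + 3 * τ :=
    expect_sub_sq_le ha han hb hτ
      ((h.linearForms.expect_densified_sub_one_sq_le hν hH he₁).trans hητ)
      (hcount' _ cap_dependsOn (fun x => le_min (ha x) zero_le_one) fun x => min_le_right _ _)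
      (hcount' b (densified_dependsOn H e₁ g') hb hb1)
  have expect_majorant : 𝔼 x, ν e₁ x ≤ 2 := by
    linarith only [(abs_le.1 (h.linearForms.abs_expect_sub_one_le he₁)).2, hη]
  have small {w w'} := h.linearForms.abs_expect_sub_one_mul_densified_mul_le (w := w) (w' := w')
    hν hH he₁ hτ hη hητ'
  calc (𝔼 x, g e₁ x * (a x - b x)) ^ 2 ≤ 2 * (4 * τ + 𝔼 x, (a x - b x) ^ 2) :=
        sq_expect_mul_sub_le (h.edge e₁ he₁).sparse_nonneg (h.edge e₁ he₁).sparse_le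
          expect_majorant (small hg hg) (small hg hg') (small hg' hg')
    _ ≤ 16 * τ := by nlinarith only [expect_sub_sq, hτ, hτ1]

lemma abs_weightedCount_sub_le (h : IsSparseDensePair H ν g g' ε η)
    (hH : IsAntichain (· ⊆ ·) (H : Set (Finset ι))) (he₁ : e₁ ∈ H) (hτ : 0 ≤ τ) (hτ1 : τ ≤ 1)
    (hη : η ≤ (τ / 4) ^ 2 ^ (Fintype.card ι + 1))
    (hcount : ∀ c : (∀ i, α i) → ℝ, DependsOn c e₁ → 0 ≤ c → c ≤ 1 →
      |weightedCount H (update g e₁ c) - weightedCount H (update g' e₁ c)| ≤ τ) :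
    |weightedCount H g - weightedCount H g'| ≤ √(16 * τ) + ε := by
  have η_le {m : ℕ} (hm : m ≤ Fintype.card ι + 1) : η ≤ (τ / 4) ^ 2 ^ m :=
    hη.trans <| pow_le_pow_of_le_one (by positivity) (by linarith only [hτ1])
      (pow_le_pow_right₀ one_le_two hm)
  have η_le_sq : η ≤ (τ / 4) ^ 2 := by simpa using η_le (m := 1) (by omega)
  have η_le_edge : 2 ^ 2 ^ #e₁ * η ≤ (τ / 2) ^ 2 ^ #e₁ :=
    calc 2 ^ 2 ^ #e₁ * η ≤ 2 ^ 2 ^ #e₁ * (τ / 4) ^ 2 ^ #e₁ := by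
          gcongr
          exact η_le ((card_le_univ e₁).trans (Nat.le_succ _))
      _ = (τ / 2) ^ 2 ^ #e₁ := by rw [← mul_pow]; ring
  have sparse_part := Real.abs_le_sqrt <| h.sq_expect_mul_sub_densified_le hH he₁ hτ hτ1
    (by nlinarith only [η_le_sq, hτ, hτ1]) (by nlinarith only [η_le_sq]) η_le_edge hcount
  rw [weightedCount_sub_weightedCount he₁ (h.edge e₁ he₁).dependsOn_sparse
    (h.edge e₁ he₁).dependsOn_dense]
  exact (abs_add_le _ _).trans (add_le_add sparse_part (h.abs_expect_sub_mul_densified_le hH he₁))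

end IsSparseDensePair

theorem exists_abs_weightedCount_sub_le (ι : Type*) [Fintype ι] [DecidableEq ι] (m : ℕ) {γ : ℝ}
    (hγ : 0 < γ) :
    ∃ ε : ℝ, 0 < ε ∧ ∃ η : ℝ, 0 < η ∧
      ∀ (α : ι → Type*) [∀ i, Fintype (α i)] [∀ i, Nonempty (α i)] (H S : Finset (Finset ι))
        (ν g g' : Finset ι → (∀ i, α i) → ℝ), IsAntichain (· ⊆ ·) (H : Set (Finset ι)) →
        IsSparseDensePair H ν g g' ε η → S ⊆ H → #S ≤ m → Set.EqOn g g' (H \ S) →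
        |weightedCount H g - weightedCount H g'| ≤ γ := by
  induction m generalizing γ with
  | zero =>
    refine ⟨1, one_pos, 1, one_pos, fun α _ _ H S ν g g' _ _ _ hS heq => ?_⟩
    obtain rfl := card_eq_zero.1 (Nat.le_zero.1 hS)
    rw [weightedCount_congr (by simpa using heq), sub_self, abs_zero]
    exact hγ.le
  | succ m ih =>
    obtain ⟨τ, hτ, hτ1, hτγ⟩ : ∃ τ : ℝ, 0 < τ ∧ τ ≤ 1 ∧ √(16 * τ) ≤ γ / 2 := by
      refine ⟨min 1 ((γ / 8) ^ 2), by positivity, min_le_left _ _, ?_⟩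
      rw [Real.sqrt_le_left (by positivity)]
      nlinarith only [min_le_right 1 ((γ / 8) ^ 2)]
    obtain ⟨ε', hε', η', hη', ih⟩ := ih hτ
    refine ⟨min ε' (γ / 2), by positivity, min η' ((τ / 4) ^ 2 ^ (Fintype.card ι + 1)),
      by positivity, fun α _ _ H S ν g g' hH h hSH hS heq => ?_⟩
    rcases S.eq_empty_or_nonempty with rfl | ⟨e₁, he₁⟩
    · rw [weightedCount_congr (by simpa using heq), sub_self, abs_zero]
      exact hγ.le
    have hcount (c : (∀ i, α i) → ℝ) (hc : DependsOn c e₁) (hc0 : 0 ≤ c) (hc1 : c ≤ 1) :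
        |weightedCount H (update g e₁ c) - weightedCount H (update g' e₁ c)| ≤ τ := by
      refine ih α H (S.erase e₁) _ _ _ hH
        ((h.mono (min_le_left _ _) (min_le_left _ _)).update_edge hε'.le hc hc0 hc1)
        ((erase_subset e₁ S).trans hSH) ?_ fun e he => ?_
      · rw [card_erase_of_mem he₁]
        omega
      · rcases eq_or_ne e e₁ with rfl | hne
        · simp only [update_self]
        · simpa only [update_of_ne hne] using
            heq ⟨he.1, fun heS => he.2 (mem_erase.2 ⟨hne, heS⟩)⟩
    have := h.abs_weightedCount_sub_le hH (hSH he₁) hτ.le hτ1 (min_le_right _ _) hcount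
    linarith only [this, hτγ, min_le_right ε' (γ / 2)]

end Transference

end HypergraphCounting

open HypergraphCounting in
theorem counting_lemma_general (γ : ℝ) (hγ : 0 < γ) (J : Type) [Fintype J] [DecidableEq J] :
    ∃ ε : ℝ, 0 < ε ∧ ∃ η : ℝ, 0 < η ∧
    ∀ (V : J → Type) [∀ j, Fintype (V j)] [∀ j, Nonempty (V j)] (H : Finset (Finset J)),
      IsAntichain (· ⊆ ·) (H : Set (Finset J)) →
      ∀ ν g g' : (e : Finset J) → ((i : ↥e) → V i) → ℝ,
      HLinearForms H ν η →
      (∀ e ∈ H, ∀ x, 0 ≤ g e x ∧ g e x ≤ ν e x) →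
      (∀ e ∈ H, ∀ x, 0 ≤ g' e x ∧ g' e x ≤ 1) →
      (∀ e ∈ H, EdgeDiscrepancy e (g e) (g' e) ε) →
      |avg (fun x : (j : J) → V j => ∏ e ∈ H, g e (restr e x)) -
        avg (fun x : (j : J) → V j => ∏ e ∈ H, g' e (restr e x))| ≤ γ := by
  obtain ⟨ε, hε, η, hη, h⟩ := exists_abs_weightedCount_sub_le J (Fintype.card (Finset J)) hγ
  refine ⟨ε, hε, η, hη, fun V _ _ H hH ν g g' hν hg hg' hdisc => ?_⟩
  simp only [avg_eq_expect]
  refine h V H H (fun e x => ν e (restr e x)) (fun e x => g e (restr e x))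
    (fun e x => g' e (restr e x)) hH ⟨fun e he => ?_, .of_hLinearForms hν⟩ subset_rfl
    (card_le_univ H) fun e he => absurd he.1 he.2
  exact
    { dependsOn_majorant := restr_dependsOn (ν e)
      dependsOn_sparse := restr_dependsOn (g e)
      dependsOn_dense := restr_dependsOn (g' e)
      sparse_nonneg := fun x => (hg e he _).1
      sparse_le := fun x => (hg e he _).2
      dense_nonneg := fun x => (hg' e he _).1
      dense_le_one := fun x => (hg' e he _).2
      discrepancy := .of_edgeDiscrepancy (hdisc e he) }

/-- **Counting lemma.** For every `γ > 0` and finite `J` there exist `ε > 0` and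
`η > 0` such that: for every hypergraph system `(J, (V_j), r, H)` and weighted
hypergraphs `ν, g, g'` with `ν` satisfying the `H`-linear forms condition within `η`,
`0 ≤ g ≤ ν`, `0 ≤ g' ≤ 1`, and `(g, g')` an `ε`-discrepancy pair,
`|E[∏_{e ∈ H} g_e(x_e)] - E[∏_{e ∈ H} g'_e(x_e)]| ≤ γ`. -/
theorem counting_lemma (γ : ℝ) (hγ : 0 < γ)
    (J : Type) [Fintype J] [DecidableEq J] :
    ∃ ε : ℝ, 0 < ε ∧ ∃ η : ℝ, 0 < η ∧
    ∀ (V : J → Type) [∀ j, Fintype (V j)] [∀ j, Nonempty (V j)]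
      (r : ℕ), 1 ≤ r → ∀ H : Finset (Finset J), (∀ e ∈ H, e.card = r) →
      ∀ ν g g' : (e : Finset J) → ((i : ↥e) → V i) → ℝ,
      HLinearForms H ν η →
      (∀ e ∈ H, ∀ x, 0 ≤ g e x ∧ g e x ≤ ν e x) →
      (∀ e ∈ H, ∀ x, 0 ≤ g' e x ∧ g' e x ≤ 1) →
      (∀ e ∈ H, EdgeDiscrepancy e (g e) (g' e) ε) →
      |avg (fun x : (j : J) → V j => ∏ e ∈ H, g e (restr e x)) -
        avg (fun x : (j : J) → V j => ∏ e ∈ H, g' e (restr e x))| ≤ γ := by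
  obtain ⟨ε, hε, η, hη, h⟩ := counting_lemma_general γ hγ J
  exact ⟨ε, hε, η, hη, fun V _ _ r _ H hr => h V H (Set.Sized.isAntichain fun e he => hr e he)⟩
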